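/- Let E ⊆ ℝ⁺ be lower porous at 0, let p₀ ∈ (0, p_(E)) and let q ∈ (1, (1−p₀)^{−1/2}). Then the q-blow up E(q) is also lower porous at 0. -/

import Mathlib

/-!
If `(a, b)` is a gap of `E` inside `(0, h)` of length more than `p₀ * h`, then `(q * a, q⁻¹ * b)` is
a gap of `blowUp E q`, since points of `E` lie either to the left of `a` or to the right of `b`.
From `a < b - p₀ * h` and `b ≤ h` its length is at least `q⁻¹ * (1 - q ^ 2 * (1 - p₀)) * h`, and the
constant is positive because `q < (1 - p₀) ^ (-1/2)`. Such gaps of `E` exist for every small `h`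
since `p₀` is below the lower porosity, so the lower porosity of `blowUp E q` is at least that
constant. The bounds `0 ≤ gapLength E h ≤ h` ensure that the real-valued infimum limits are genuine.
-/

open Filter Set

/-- `gapLength E h` = λ(E,h): the length of the largest open subinterval of (0,h)
containing no point of `E` (0 if no such interval exists). -/
noncomputable def gapLength (E : Set ℝ) (h : ℝ) : ℝ :=
  sSup {l : ℝ | ∃ a b : ℝ, 0 ≤ a ∧ a ≤ b ∧ b ≤ h ∧ Set.Ioo a b ∩ E = ∅ ∧ l = b - a}

/-- The right upper porosity of `E` at 0. -/
noncomputable def upperPorosity (E : Set ℝ) : ℝ :=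
  Filter.limsup (fun h => gapLength E h / h) (nhdsWithin (0:ℝ) (Set.Ioi 0))

/-- The right lower porosity of `E` at 0. -/
noncomputable def lowerPorosity (E : Set ℝ) : ℝ :=
  Filter.liminf (fun h => gapLength E h / h) (nhdsWithin (0:ℝ) (Set.Ioi 0))

/-- `UMP E`: sequences of positive reals tending to 0 along which the upper limit
in the definition of porosity is attained. -/
def UMP (E : Set ℝ) : Set (ℕ → ℝ) :=
  {h | (∀ n, 0 < h n) ∧ Filter.Tendsto h Filter.atTop (nhds 0) ∧
    Filter.Tendsto (fun n => gapLength E (h n) / h n) Filter.atTop (nhds (upperPorosity E))}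

/-- The set of all strongly porous at 0 subsets of ℝ⁺. -/
def SP : Set (Set ℝ) := {E | E ⊆ Set.Ici 0 ∧ upperPorosity E = 1}

/-- `I` is an ideal on the set `X`. -/
def IsIdealOn (X : Set ℝ) (I : Set (Set ℝ)) : Prop :=
  I.Nonempty ∧ (∀ B ∈ I, B ⊆ X) ∧ (∀ B ∈ I, ∀ C : Set ℝ, C ⊆ B → C ∈ I) ∧
    (∀ B ∈ I, ∀ C ∈ I, B ∪ C ∈ I) ∧ X ∉ I

/-- `I` is a `Γ`-maximal ideal on `X`. -/
def IsMaximalIdealIn (X : Set ℝ) (Γ I : Set (Set ℝ)) : Prop :=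
  IsIdealOn X I ∧ I ⊆ Γ ∧ ∀ J : Set (Set ℝ), IsIdealOn X J → I ⊆ J → J ⊆ Γ → I = J

/-- `Î(SP)`: the intersection of all SP-maximal ideals on ℝ⁺. -/
def hatISP : Set (Set ℝ) :=
  {A | ∀ I : Set (Set ℝ), IsMaximalIdealIn (Set.Ici 0) SP I → A ∈ I}

/-- The q-blow up `E(q)` of a set `E ⊆ ℝ⁺`. -/
def blowUp (E : Set ℝ) (q : ℝ) : Set ℝ := ⋃ x ∈ E, Set.Ioo (q⁻¹ * x) (q * x)

theorem gapLength_set_le {E : Set ℝ} {h l : ℝ}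
    (hl : l ∈ {l : ℝ | ∃ a b : ℝ, 0 ≤ a ∧ a ≤ b ∧ b ≤ h ∧ Set.Ioo a b ∩ E = ∅ ∧ l = b - a}) :
    l ≤ h := by
  obtain ⟨a, b, h1, h2, h3, -, rfl⟩ := hl
  linarith

theorem gapLength_le {E : Set ℝ} {h : ℝ} (hh : 0 ≤ h) : gapLength E h ≤ h :=
  Real.sSup_le (fun _ hl => gapLength_set_le hl) hh

theorem le_gapLength {E : Set ℝ} {a b h : ℝ} (ha : 0 ≤ a) (hab : a ≤ b) (hb : b ≤ h)
    (hE : Set.Ioo a b ∩ E = ∅) : b - a ≤ gapLength E h :=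
  le_csSup ⟨h, fun _ hl => gapLength_set_le hl⟩ ⟨a, b, ha, hab, hb, hE, rfl⟩

theorem gapLength_nonneg (E : Set ℝ) (h : ℝ) : 0 ≤ gapLength E h := by
  refine Real.sSup_nonneg ?_
  rintro l ⟨a, b, -, h2, -, -, rfl⟩
  linarith

/-- Dilating both ends of a gap of `E` towards its interior by the factor `q` gives a gap of the
`q`-blow up. -/
theorem Ioo_inter_blowUp {E : Set ℝ} {a b q : ℝ} (hq : 0 < q) (hE : Set.Ioo a b ∩ E = ∅) :
    Set.Ioo (q * a) (q⁻¹ * b) ∩ blowUp E q = ∅ := by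
  refine Set.eq_empty_of_forall_notMem ?_
  rintro y ⟨⟨hy1, hy2⟩, hy⟩
  simp only [blowUp, Set.mem_iUnion] at hy
  obtain ⟨x, hx, hx1, hx2⟩ := hy
  have hax : a < x := lt_of_mul_lt_mul_left (hy1.trans hx2) hq.le
  have hxb : x < b := lt_of_mul_lt_mul_left (hx1.trans hy2) (inv_pos.2 hq).le
  exact Set.notMem_empty x (hE ▸ ⟨⟨hax, hxb⟩, hx⟩)

theorem le_gapLength_blowUp {E : Set ℝ} {p q h : ℝ} (hh : 0 < h) (hq : 1 < q)
    (hpq : q ^ 2 * (1 - p) < 1) (hgap : p * h < gapLength E h) :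
    q⁻¹ * (1 - q ^ 2 * (1 - p)) * h ≤ gapLength (blowUp E q) h := by
  have hq0 : 0 < q := by linarith
  obtain ⟨l, ⟨a, b, ha, hab, hb, hE, rfl⟩, hl⟩ := exists_lt_of_lt_csSup
    (by exact ⟨0, 0, 0, le_rfl, le_rfl, hh.le, by simp, by simp⟩) hgap
  have key : (1 - q ^ 2 * (1 - p)) * h ≤ b - q ^ 2 * a := by
    nlinarith [mul_nonneg (sq_nonneg q) (sub_nonneg.2 hl.le),
      mul_nonneg (by nlinarith : (0:ℝ) ≤ q ^ 2 - 1) (sub_nonneg.2 hb)]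
  have hlen : q⁻¹ * (1 - q ^ 2 * (1 - p)) * h ≤ q⁻¹ * b - q * a := by
    calc q⁻¹ * (1 - q ^ 2 * (1 - p)) * h = q⁻¹ * ((1 - q ^ 2 * (1 - p)) * h) := by ring
      _ ≤ q⁻¹ * (b - q ^ 2 * a) := by gcongr
      _ = q⁻¹ * b - q * a := by field_simp
  have hpos : 0 ≤ q⁻¹ * (1 - q ^ 2 * (1 - p)) * h := by
    have := sub_pos.2 hpq
    positivity
  refine hlen.trans (le_gapLength (by positivity) (by linarith) ?_ (Ioo_inter_blowUp hq0 hE))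
  have : q⁻¹ * b ≤ 1 * b := mul_le_mul_of_nonneg_right (inv_le_one_of_one_le₀ hq.le) (by linarith)
  linarith

theorem stmt16 (E : Set ℝ) (hE : E ⊆ Set.Ici 0) (hlp : 0 < lowerPorosity E)
    (p₀ : ℝ) (hp₀ : p₀ ∈ Set.Ioo 0 (lowerPorosity E))
    (q : ℝ) (hq : q ∈ Set.Ioo 1 (1 / Real.sqrt (1 - p₀))) :
    0 < lowerPorosity (blowUp E q) := by
  obtain ⟨hq1, hq2⟩ := hq
  have hq0 : 0 < q := by linarith
  -- `p₀ ≥ 1` would make the square root and its reciprocal zero, leaving no room for `q`.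
  have hs : 0 < Real.sqrt (1 - p₀) := one_div_pos.1 (hq0.trans hq2)
  have hpq : q ^ 2 * (1 - p₀) < 1 := by
    have h1 : q * Real.sqrt (1 - p₀) < 1 := (lt_div_iff₀ hs).1 hq2
    rw [← Real.sq_sqrt (Real.sqrt_pos.1 hs).le, ← mul_pow]
    exact pow_lt_one₀ (by positivity) h1 two_ne_zero
  have hpos : ∀ᶠ h : ℝ in nhdsWithin 0 (Set.Ioi 0), 0 < h := self_mem_nhdsWithin
  have hev : ∀ᶠ h in nhdsWithin (0:ℝ) (Set.Ioi 0), p₀ < gapLength E h / h := by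
    refine eventually_lt_of_lt_liminf hp₀.2 (isBoundedUnder_of_eventually_ge (a := 0) ?_)
    filter_upwards [hpos] with h hh using div_nonneg (gapLength_nonneg E h) hh.le
  have hc : 0 < q⁻¹ * (1 - q ^ 2 * (1 - p₀)) := mul_pos (inv_pos.2 hq0) (sub_pos.2 hpq)
  refine hc.trans_le (le_liminf_of_le ?_ ?_)
  · refine (isBoundedUnder_of_eventually_le (a := 1) ?_).isCoboundedUnder_ge
    filter_upwards [hpos] with h hh using div_le_one_of_le₀ (gapLength_le hh.le) hh.le
  · filter_upwards [hpos, hev] with h hh hgap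
    exact (le_div_iff₀ hh).2 (le_gapLength_blowUp hh hq1 hpq ((lt_div_iff₀ hh).1 hgap))
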